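/- Suppose a,b,c,d > 0 and for every λ the volume of {x ∈ L(4)_{a,b,c,d} : x₁+x₂+x₃+x₄ ≤ λ} equals the volume of {x ∈ L(4)_{a,b,c,d} : x₁+x₂+x₃+x₄ ≥ a+b+c+d − λ}. Then a = d and b = c. -/

import Mathlib

/-!
After rescaling the coordinates, `L` is the simplex `0 ≤ u₀ ≤ u₁ ≤ u₂ ≤ u₃ ≤ 1` carrying the linear
form `S u = a u₀ + b u₁ + c u₂ + d u₃`, and the hypothesis says that the distribution of `S` on this
simplex is symmetric about `T / 2`, where `T = a + b + c + d`. So the first and third moments of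
`T / 2 - S` vanish (`integral_odd_eq_zero`).

The `k`-th moment of a linear form over a simplex is a positive multiple of the complete homogeneous
symmetric polynomial `h_k` in its values at the vertices (`integral_chain_linear`,
`integral_chain_linear_cube`, by induction on the dimension). The vertex values of `T / 2 - S` are
`-T/2, x, y, z, T/2` with `x = a - T/2 < y = a + b - T/2 < z = a + b + c - T/2`. Vanishing of `h₁`
gives `x + y + z = 0`; then vanishing of `h₃` gives `x³ + y³ + z³ = 0`, that is `3xyz = 0`. As
`x < y < z` have sum `0`, the middle one is `0`, and `y = 0`, `x + z = 0` are the required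
`a + b = c + d` and `a = d`.
-/

open MeasureTheory

/-- The simplex `s ≤ u 0 ≤ u 1 ≤ ⋯ ≤ u (n - 1) ≤ 1`, defined by recursion on the dimension so that
slicing along the first coordinate is definitional. For `n = 0` it is the whole one-point space,
whatever `s` is. -/
def chain : (n : ℕ) → ℝ → Set (Fin n → ℝ)
  | 0, _ => Set.univ
  | n + 1, s => {u | s ≤ u 0 ∧ u 0 ≤ 1 ∧ Fin.tail u ∈ chain n (u 0)}

/-- Joint closedness in `(s, u)` is what makes the induction go through. -/
lemma chain_closed (n : ℕ) : IsClosed {p : ℝ × (Fin n → ℝ) | p.2 ∈ chain n p.1} := by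
  induction n with
  | zero => simp [chain]
  | succ n ih =>
    have hf : Continuous fun p : ℝ × (Fin (n + 1) → ℝ) => (p.2 0, Fin.tail p.2) := by
      unfold Fin.tail
      fun_prop
    have h0 : Continuous fun p : ℝ × (Fin (n + 1) → ℝ) => p.2 0 := by fun_prop
    exact (isClosed_le continuous_fst h0).inter
      ((isClosed_le h0 continuous_const).inter (ih.preimage hf))

lemma chain_subset (n : ℕ) (s : ℝ) : chain n s ⊆ Set.Icc (fun _ => s) (fun _ => 1) := by
  induction n generalizing s with
  | zero => intro u _; exact ⟨fun i => i.elim0, fun i => i.elim0⟩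
  | succ n ih =>
    rintro u ⟨h0, h1, h2⟩
    obtain ⟨l, r⟩ := ih _ h2
    refine ⟨fun i => ?_, fun i => ?_⟩
    · refine Fin.cases h0 (fun j => h0.trans (l j)) i
    · exact Fin.cases h1 (fun j => r j) i

lemma chain_compact (n : ℕ) (s : ℝ) : IsCompact (chain n s) :=
  isCompact_Icc.of_isClosed_subset
    ((chain_closed n).preimage (f := fun u => (s, u)) (by fun_prop)) (chain_subset n s)

/-- Fubini: the slice of `chain (n + 1) s` over `u 0 = x` is `chain n x`. -/
lemma integral_chain_succ (n : ℕ) {s : ℝ} (hs : s ≤ 1) {g : (Fin (n + 1) → ℝ) → ℝ}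
    (hg : Continuous g) :
    ∫ u in chain (n + 1) s, g u = ∫ x in s..1, ∫ v in chain n x, g (Fin.cons x v) := by
  have hm : ∀ n s, MeasurableSet (chain n s) := fun n s => (chain_compact n s).measurableSet
  have hint : Integrable ((chain (n + 1) s).indicator g) :=
    (integrable_indicator_iff (hm _ _)).2 (hg.continuousOn.integrableOn_compact (chain_compact _ _))
  have hp := (volume_preserving_piFinSuccAbove (fun _ : Fin (n + 1) => ℝ) 0).symm
  rw [← integral_indicator (hm _ _), ← hp.integral_comp', Measure.volume_eq_prod, integral_prod]
  · rw [intervalIntegral.integral_of_le hs, ← integral_Icc_eq_integral_Ioc,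
      ← integral_indicator measurableSet_Icc]
    congr 1 with x
    by_cases hx : x ∈ Set.Icc s 1
    · rw [Set.indicator_of_mem hx, ← integral_indicator (hm _ _)]
      congr 1 with v
      by_cases hv : v ∈ chain n x
      · rw [Set.indicator_of_mem hv, Set.indicator_of_mem]
        · simp [MeasurableEquiv.piFinSuccAbove, Fin.insertNthEquiv]
        · simpa [MeasurableEquiv.piFinSuccAbove, Fin.insertNthEquiv, chain] using ⟨hx.1, hx.2, hv⟩
      · rw [Set.indicator_of_notMem hv, Set.indicator_of_notMem]
        simp [MeasurableEquiv.piFinSuccAbove, Fin.insertNthEquiv, chain, hv]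
    · rw [Set.indicator_of_notMem hx]
      refine (integral_congr_ae (.of_forall fun v => ?_)).trans (integral_zero _ _)
      refine Set.indicator_of_notMem (fun h => hx ?_) _
      simp [MeasurableEquiv.piFinSuccAbove, Fin.insertNthEquiv, chain] at h
      exact ⟨h.1, h.2.1⟩
  · exact hp.integrable_comp_of_integrable hint

/-- Inductive step for evaluating integrals over chains: if the slice integrals are `f`, then the
integral over `chain (n + 1) s` is the antiderivative `F` of `-f` that vanishes at `1`. -/
lemma integral_chain_succ_of_hasDerivAt (n : ℕ) {s : ℝ} (hs : s ≤ 1) {g : (Fin (n + 1) → ℝ) → ℝ}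
    (hg : Continuous g) {F f : ℝ → ℝ} (hf : Continuous f)
    (hgf : ∀ x ≤ 1, ∫ v in chain n x, g (Fin.cons x v) = f x)
    (hF : ∀ x, HasDerivAt F (- f x) x) (h1 : F 1 = 0) :
    ∫ u in chain (n + 1) s, g u = F s := by
  rw [integral_chain_succ n hs hg]
  rw [intervalIntegral.integral_congr (g := f) (fun x hx => hgf x (by
    rw [Set.uIcc_of_le hs] at hx; exact hx.2))]
  rw [intervalIntegral.integral_eq_sub_of_hasDerivAt (f := fun x => - F x)
    (fun x _ => by have h := (hF x).neg; rwa [neg_neg] at h) (hf.intervalIntegrable _ _)]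
  simp [h1]

lemma integral_chain_zero (s : ℝ) (g : (Fin 0 → ℝ) → ℝ) (y : ℝ) (h : ∀ u, g u = y) :
    ∫ u in chain 0 s, g u = y := by
  simp [chain, h, Measure.real, volume_pi]

/-- The partial sums `w 0 + ⋯ + w j`. The values of the form `e + ∑ i, w i * (1 - u i)` at the
vertices of `chain n s` are `e` and `e + (1 - s) * partialSums w j` for `j : Fin n`. -/
def partialSums : {n : ℕ} → (Fin n → ℝ) → Fin n → ℝ
  | 0, _ => Fin.elim0
  | _ + 1, w => Fin.cons (w 0) fun j => w 0 + partialSums (Fin.tail w) j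

lemma sum_partialSums_succ {n : ℕ} (w : Fin (n + 1) → ℝ) (k : ℕ) :
    ∑ j, partialSums w j ^ k = w 0 ^ k + ∑ j, (w 0 + partialSums (Fin.tail w) j) ^ k := by
  simp [Fin.sum_univ_succ, partialSums]

lemma sum_add_pow_one {n : ℕ} (x : ℝ) (v : Fin n → ℝ) :
    ∑ j, (x + v j) ^ 1 = n * x + ∑ j, v j ^ 1 := by
  simp [Finset.sum_add_distrib]

lemma sum_add_pow_two {n : ℕ} (x : ℝ) (v : Fin n → ℝ) :
    ∑ j, (x + v j) ^ 2 = n * x ^ 2 + 2 * x * ∑ j, v j ^ 1 + ∑ j, v j ^ 2 := by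
  simp [add_sq, Finset.sum_add_distrib, Finset.mul_sum]

lemma sum_add_pow_three {n : ℕ} (x : ℝ) (v : Fin n → ℝ) :
    ∑ j, (x + v j) ^ 3 =
      n * x ^ 3 + 3 * x ^ 2 * ∑ j, v j ^ 1 + 3 * x * ∑ j, v j ^ 2 + ∑ j, v j ^ 3 := by
  have (j : Fin n) : (x + v j) ^ 3 = x ^ 3 + 3 * x ^ 2 * v j ^ 1 + 3 * x * v j ^ 2 + v j ^ 3 := by
    ring
  simp [this, Finset.sum_add_distrib, Finset.mul_sum]

/-- Fixing `u 0 = x` turns `e + ∑ i, w i * (1 - u i)` into a form of the same kind in one variable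
fewer. -/
lemma linear_cons {n : ℕ} (e x : ℝ) (w : Fin (n + 1) → ℝ) (v : Fin n → ℝ) :
    e + ∑ i, w i * (1 - (Fin.cons x v : Fin (n + 1) → ℝ) i) =
      (e + w 0 * (1 - x)) + ∑ i, Fin.tail w i * (1 - v i) := by
  simp [Fin.sum_univ_succ, Fin.tail, add_assoc]

/-- The first moment: `1 / (n + 1)!` times `(1 - s) ^ n * h₁`, with `h₁` the sum of the vertex values. -/
lemma integral_chain_linear (n : ℕ) (w : Fin n → ℝ) (e s : ℝ) (hs : s ≤ 1) :
    ∫ u in chain n s, (e + ∑ i, w i * (1 - u i)) =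
      (1 - s) ^ n * ((n + 1) * e + (1 - s) * ∑ j, partialSums w j ^ 1) / (n + 1).factorial := by
  induction n generalizing e s with
  | zero => exact integral_chain_zero s _ _ (by simp)
  | succ n ih =>
    refine integral_chain_succ_of_hasDerivAt n hs (by fun_prop)
      (F := fun s => (1 - s) ^ (n + 1) * (((n + 1 : ℕ) + 1) * e +
        (1 - s) * ∑ j, partialSums w j ^ 1) / (n + 2).factorial)
      (f := fun x => (1 - x) ^ n * ((n + 1) * (e + w 0 * (1 - x)) +
        (1 - x) * ∑ j, partialSums (Fin.tail w) j ^ 1) / (n + 1).factorial)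
      (by fun_prop) (fun x hx => ?_) (fun x => ?_) (by simp)
    · simp only [linear_cons]
      exact ih _ _ _ hx
    · have ht : HasDerivAt (fun x : ℝ => 1 - x) (-1) x := (hasDerivAt_id x).const_sub 1
      rw [sum_partialSums_succ, sum_add_pow_one, Nat.factorial_succ (n + 1)]
      generalize ∑ j, partialSums (Fin.tail w) j ^ 1 = p1
      refine (((ht.fun_pow (n + 1)).fun_mul
        ((ht.mul_const _).const_add _)).div_const _).congr_deriv ?_
      have : ((n + 1).factorial : ℝ) ≠ 0 := by positivity
      push_cast
      field_simp
      ring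

/-- Six times the complete homogeneous symmetric polynomial `h₃` in `N` numbers of the form
`e + t * δ`, where `p1`, `p2`, `p3` are the first three power sums of the `δ`s. It is written
through the power sums `P₁, P₂, P₃` of the numbers themselves, as `P₁³ + 3 P₁ P₂ + 2 P₃`, so
that the induction on dimension reduces to one polynomial identity. -/
noncomputable def sixH3 (N e p1 p2 p3 t : ℝ) : ℝ :=
  (N * e + t * p1) ^ 3 +
    3 * (N * e + t * p1) * (N * e ^ 2 + 2 * e * t * p1 + t ^ 2 * p2) +
    2 * (N * e ^ 3 + 3 * e ^ 2 * t * p1 + 3 * e * t ^ 2 * p2 + t ^ 3 * p3)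

lemma hasDerivAt_sixH3 (N e p1 p2 p3 t : ℝ) : HasDerivAt (sixH3 N e p1 p2 p3)
    (3 * (N * e + t * p1) ^ 2 * p1 +
      3 * p1 * (N * e ^ 2 + 2 * e * t * p1 + t ^ 2 * p2) +
      3 * (N * e + t * p1) * (2 * e * p1 + 2 * t * p2) +
      2 * (3 * e ^ 2 * p1 + 6 * e * t * p2 + 3 * t ^ 2 * p3)) t := by
  have ht := hasDerivAt_id' t
  have hP := (ht.mul_const p1).const_add (N * e)
  have hQ := ((ht.const_mul (2 * e)).mul_const p1).const_add (N * e ^ 2) |>.fun_add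
    ((ht.fun_pow 2).mul_const p2)
  have hR := ((((ht.const_mul (3 * e ^ 2)).mul_const p1).const_add (N * e ^ 3)).fun_add
    (((ht.fun_pow 2).const_mul (3 * e)).mul_const p2)).fun_add ((ht.fun_pow 3).mul_const p3)
  refine (((hP.fun_pow 3).fun_add ((hP.const_mul 3).fun_mul hQ)).fun_add
    (hR.const_mul 2)).congr_deriv ?_
  simp
  ring

/-- The third moment: `6 / (n + 3)!` times `(1 - s) ^ n * h₃`, with `h₃` evaluated at the `n + 1`
vertex values (the value `e` corresponds to `δ = 0`). -/
lemma integral_chain_linear_cube (n : ℕ) (w : Fin n → ℝ) (e s : ℝ) (hs : s ≤ 1) :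
    ∫ u in chain n s, (e + ∑ i, w i * (1 - u i)) ^ 3 =
      (1 - s) ^ n * sixH3 (n + 1) e (∑ j, partialSums w j ^ 1) (∑ j, partialSums w j ^ 2)
        (∑ j, partialSums w j ^ 3) (1 - s) / (n + 3).factorial := by
  induction n generalizing e s with
  | zero =>
    refine integral_chain_zero s _ _ fun u => ?_
    simp [sixH3, Nat.factorial]
    ring
  | succ n ih =>
    refine integral_chain_succ_of_hasDerivAt n hs (by fun_prop)
      (F := fun s => (1 - s) ^ (n + 1) * sixH3 ((n + 1 : ℕ) + 1) e (∑ j, partialSums w j ^ 1)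
        (∑ j, partialSums w j ^ 2) (∑ j, partialSums w j ^ 3) (1 - s) / (n + 4).factorial)
      (f := fun x => (1 - x) ^ n * sixH3 (n + 1) (e + w 0 * (1 - x))
        (∑ j, partialSums (Fin.tail w) j ^ 1) (∑ j, partialSums (Fin.tail w) j ^ 2)
        (∑ j, partialSums (Fin.tail w) j ^ 3) (1 - x) / (n + 3).factorial)
      (by unfold sixH3; fun_prop) (fun x hx => ?_) (fun x => ?_) (by simp)
    · simp only [linear_cons]
      exact ih _ _ _ hx
    · have ht : HasDerivAt (fun x : ℝ => 1 - x) (-1) x := (hasDerivAt_id x).const_sub 1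
      simp only [sum_partialSums_succ, sum_add_pow_one, sum_add_pow_two, sum_add_pow_three,
        Nat.factorial_succ (n + 3)]
      generalize ∑ j, partialSums (Fin.tail w) j ^ 1 = p1
      generalize ∑ j, partialSums (Fin.tail w) j ^ 2 = p2
      generalize ∑ j, partialSums (Fin.tail w) j ^ 3 = p3
      refine (((ht.fun_pow (n + 1)).fun_mul ((hasDerivAt_sixH3 _ _ _ _ _ _).comp x ht)).div_const
        _).congr_deriv ?_
      have : ((n + 3).factorial : ℝ) ≠ 0 := by positivity
      simp only [Function.comp, sixH3]
      push_cast
      field_simp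
      ring

/-- If `S` and `T - S` are equidistributed on `K`, functions of `S` odd about `T / 2` integrate
to zero over `K`. -/
lemma integral_odd_eq_zero {n : ℕ} {K : Set (Fin n → ℝ)} (hK : IsCompact K)
    {S : (Fin n → ℝ) → ℝ} (hS : Continuous S) (T : ℝ)
    (hsymm : ∀ lam, volume {u ∈ K | S u ≤ lam} = volume {u ∈ K | T - lam ≤ S u})
    {f : ℝ → ℝ} (hf : Continuous f) (hodd : ∀ y, f (T - y) = - f y) :
    ∫ u in K, f (S u) = 0 := by
  have : IsFiniteMeasure (volume.restrict K) := ⟨by simpa using hK.measure_lt_top⟩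
  have hmap : (volume.restrict K).map S = (volume.restrict K).map (fun u => T - S u) := by
    refine Measure.ext_of_Iic _ _ fun lam => ?_
    rw [Measure.map_apply hS.measurable measurableSet_Iic,
      Measure.map_apply (by fun_prop) measurableSet_Iic,
      Measure.restrict_apply (hS.measurable measurableSet_Iic),
      Measure.restrict_apply ((by fun_prop : Measurable fun u => T - S u) measurableSet_Iic)]
    convert hsymm lam using 2
    · ext u; simp [and_comm]
    · ext u; simp [and_comm, add_comm]
  have h1 := integral_map (μ := volume.restrict K) hS.measurable.aemeasurable
    hf.aestronglyMeasurable
  have h2 := integral_map (μ := volume.restrict K) (φ := fun u => T - S u)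
    (by fun_prop) hf.aestronglyMeasurable
  rw [hmap, h2] at h1
  simp only [hodd, integral_neg] at h1
  linarith

lemma volume_preimage_smul (w : Fin 4 → ℝ) (hw : ∀ i, 0 < w i) (A : Set (Fin 4 → ℝ)) :
    volume {u : Fin 4 → ℝ | (fun i => w i * u i) ∈ A} = ENNReal.ofReal |(∏ i, w i)⁻¹| * volume A := by
  have hdet : LinearMap.det (Matrix.toLin' (Matrix.diagonal w)) = ∏ i, w i := by simp
  have hne : ∏ i, w i ≠ 0 := (Finset.prod_pos fun i _ => hw i).ne'
  rw [← hdet, ← Measure.addHaar_preimage_linearMap volume (hdet ▸ hne)]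
  congr 1
  ext u
  have hu : Matrix.toLin' (Matrix.diagonal w) u = fun i => w i * u i := by
    ext i
    simp [Matrix.mulVec_diagonal]
  simp [← hu]

/-- If the weighted polytope `L(4)_{a,b,c,d}` is volume rank-symmetric about the middle
rank `(a+b+c+d)/2`, then `a = d` and `b = c`. -/
theorem weighted_L4_volume_rank_symmetry (a b c d : ℝ)
    (ha : 0 < a) (hb : 0 < b) (hc : 0 < c) (hd : 0 < d)
    (L : Set (Fin 4 → ℝ))
    (hL : L = {x | 0 ≤ x 0 / a ∧ x 0 / a ≤ x 1 / b ∧ x 1 / b ≤ x 2 / c ∧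
                   x 2 / c ≤ x 3 / d ∧ x 3 / d ≤ 1})
    (hsymm : ∀ lam : ℝ,
      volume {x ∈ L | ∑ i, x i ≤ lam} =
      volume {x ∈ L | a + b + c + d - lam ≤ ∑ i, x i}) :
    a = d ∧ b = c := by
  set w : Fin 4 → ℝ := ![a, b, c, d] with hw
  set T := a + b + c + d with hT
  set S : (Fin 4 → ℝ) → ℝ := fun u => ∑ i, w i * u i with hS
  have hwpos : ∀ i, 0 < w i := by
    intro i; fin_cases i <;> simpa [w]
  have hmem (u : Fin 4 → ℝ) : (fun i => w i * u i) ∈ L ↔ u ∈ chain 4 0 := by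
    simp [hL, w, chain, Fin.tail, ha.ne', hb.ne', hc.ne', hd.ne']
    grind
  have hvol (lam : ℝ) : volume {u ∈ chain 4 0 | S u ≤ lam} =
      volume {u ∈ chain 4 0 | T - lam ≤ S u} := by
    have h1 := volume_preimage_smul w hwpos {x ∈ L | ∑ i, x i ≤ lam}
    rw [hsymm, ← volume_preimage_smul w hwpos] at h1
    simpa only [Set.mem_ofPred_eq, hmem] using h1
  have hlin (u : Fin 4 → ℝ) : -T / 2 + ∑ i, w i * (1 - u i) = T / 2 - S u := by
    simp [hS, w, Fin.sum_univ_four, hT]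
    ring
  have hcont : Continuous S := by fun_prop
  have m1 := integral_odd_eq_zero (chain_compact 4 0) hcont T hvol (f := fun y => T / 2 - y)
    (by fun_prop) (fun y => by ring)
  have m3 := integral_odd_eq_zero (chain_compact 4 0) hcont T hvol (f := fun y => (T / 2 - y) ^ 3)
    (by fun_prop) (fun y => by ring)
  simp only [← hlin] at m1 m3
  rw [integral_chain_linear 4 w _ 0 zero_le_one] at m1
  rw [integral_chain_linear_cube 4 w _ 0 zero_le_one] at m3
  have ps0 : partialSums w 0 = a := rfl
  have ps1 : partialSums w 1 = a + b := rfl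
  have ps2 : partialSums w 2 = a + (b + c) := rfl
  have ps3 : partialSums w 3 = a + (b + (c + d)) := rfl
  simp [Fin.sum_univ_four, ps0, ps1, ps2, ps3, Nat.factorial_ne_zero, sixH3] at m1 m3
  set x := a - T / 2 with hx
  set y := a + b - T / 2 with hy
  set z := a + b + c - T / 2 with hz
  have e1 : x + y + z = 0 := by rw [hx, hy, hz]; linarith
  have e3 : x ^ 3 + y ^ 3 + z ^ 3 = 0 := by
    rw [m1] at m3
    rw [hx, hy, hz, hT]
    rw [hT] at m3
    linear_combination m3 / 2
  have hxyz : x * y * z = 0 := by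
    linear_combination e3 / 3 - (x ^ 2 + y ^ 2 + z ^ 2 - x * y - y * z - z * x) / 3 * e1
  have hy0 : y = 0 := by
    have h1 : x < y := by linarith
    have h2 : y < z := by linarith
    have h3 : x ≠ 0 := by intro h; linarith
    have h4 : z ≠ 0 := by intro h; linarith
    simpa [h3, h4] using hxyz
  constructor <;> linarith
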